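/- arXiv:1412.4953 — 2 statements merged into one kernel-verified Lean document; each statement's English description precedes it below -/
import Mathlib

section
/- Let R be a Koszul algebra over a field k and let M be an indecomposable linear R-module. Let n ≥ 1 and let 0 ≠ η: P_M^n → M represent an element of Δ_M^n = Ext^n_R(M,M)_{-n}, and for each i ≥ 0 let l^i: P_M^{n+i} → P_M^i be liftings of η along a minimal linear resolution of M, with all entries in R_0. If l^j is a monomorphism for some j ≥ 0, then all subsequent liftings l^{j+k} for k ≥ 0 are monomorphisms. -/
/-!
The claim follows by induction from the step `l i` injective ⟹ `l (i + 1)` injective.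

If `x` lies in the generating degree of `P^{n+i+1}` and `l (i + 1) x = 0`, then `l i (d x) = 0`, so
`d x = 0` and, by exactness, `x` is a boundary. As `P^{n+i+2}` lives in strictly larger degrees,
`x = 0`. So `l (i + 1)` is injective on generators.

It remains to see that a map `f : A → B`, which maps the generating degree of `A` injectively to
the lowest degree of `B`, is injective when `B` is projective (`injective_of_injOn_generators`).
Let `r` be the graded radical. Then `f` induces an injection `A/rA → B/rB` of modules over the
semisimple ring `R/r = R₀`, which has a retraction; projectivity of `B` lifts the retraction to
`s : B → A` with `N = 1 - s f` mapping `A` to `rA`. If `f x = 0` then `x = N x`, hence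
`x = N^m x ∈ r^m A` for all `m`, and this forces `x = 0` because `r^m A` lives in degrees which tend
to infinity.
-/

/-- A grading by `ℤ` on a module `M` over the graded `k`-algebra `R = ⊕ᵢ Rᵢ` (with
grading `𝒜 : ℕ → Submodule k R`): `M = ⊕ⱼ Mⱼ` as `k`-vector spaces, compatibly with the
grading of `R`. -/
structure ModuleGrading (k : Type) [Field k] (R : Type) [Ring R] [Algebra k R]
    (𝒜 : ℕ → Submodule k R)
    (M : Type) [AddCommGroup M] [Module R M] [Module k M] [IsScalarTower k R M] where
  piece : ℤ → Submodule k M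
  internal : DirectSum.IsInternal piece
  smul_mem : ∀ {i : ℕ} {j : ℤ} {r : R} {x : M},
      r ∈ 𝒜 i → x ∈ piece j → r • x ∈ piece ((i : ℤ) + j)

variable (k : Type) [Field k] (R : Type) [Ring R] [Algebra k R]
  (𝒜 : ℕ → Submodule k R)

/-- A linear (graded projective) resolution `⋯ → P¹ → P⁰ → M → 0` of a graded module `M`
over the graded algebra `R`: each `Pⁿ` is a finitely generated graded projective module
generated in degree `n`, and all differentials (and the augmentation) are degree-zero
homomorphisms.  (A graded module `M` generated in degree `0` is a *linear module* when
such a resolution exists; in particular this resolution is then minimal.) -/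
structure LinearResolution (M : Type) [AddCommGroup M] [Module R M] [Module k M]
    [IsScalarTower k R M] (ℳ : ModuleGrading k R 𝒜 M) where
  P : ℕ → Type
  [acg : ∀ n, AddCommGroup (P n)]
  [modR : ∀ n, Module R (P n)]
  [modk : ∀ n, Module k (P n)]
  [tower : ∀ n, IsScalarTower k R (P n)]
  grading : ∀ n, ModuleGrading k R 𝒜 (P n)
  projective : ∀ n, Module.Projective R (P n)
  finite : ∀ n, Module.Finite R (P n)
  /-- `Pⁿ` is generated in degree `n`. -/
  generated : ∀ n : ℕ, Submodule.span R ((grading n).piece (n : ℤ) : Set (P n)) = ⊤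
  vanish : ∀ (n : ℕ) (j : ℤ), j < (n : ℤ) → (grading n).piece j = ⊥
  d : ∀ n, P (n + 1) →ₗ[R] P n
  augment : P 0 →ₗ[R] M
  d_degree : ∀ (n : ℕ) {j : ℤ} {x : P (n + 1)},
      x ∈ (grading (n + 1)).piece j → d n x ∈ (grading n).piece j
  augment_degree : ∀ {j : ℤ} {x : P 0}, x ∈ (grading 0).piece j → augment x ∈ ℳ.piece j
  augment_surjective : Function.Surjective augment
  exact_zero : LinearMap.ker augment = LinearMap.range (d 0)
  exact_succ : ∀ n, LinearMap.ker (d n) = LinearMap.range (d (n + 1))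

attribute [instance] LinearResolution.acg LinearResolution.modR LinearResolution.modk
  LinearResolution.tower

/-- The degree-zero part `R₀ = 𝒜 0` of a graded algebra, as a `k`-subalgebra. -/
def gradeZeroSubalgebra [GradedAlgebra 𝒜] : Subalgebra k R where
  carrier := 𝒜 0
  mul_mem' := fun {a b} ha hb => by simpa using SetLike.mul_mem_graded ha hb
  one_mem' := SetLike.one_mem_graded 𝒜
  add_mem' := fun {a b} ha hb => (𝒜 0).add_mem ha hb
  zero_mem' := (𝒜 0).zero_mem
  algebraMap_mem' := fun c => by
    simpa [Algebra.algebraMap_eq_smul_one] using (𝒜 0).smul_mem c (SetLike.one_mem_graded 𝒜)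

/-- The graded radical `r = R₁ ⊕ R₂ ⊕ ⋯` of the graded algebra `R`, as a left ideal. -/
def gradedRadical : Ideal R :=
  Submodule.span R {x : R | ∃ i : ℕ, 0 < i ∧ x ∈ 𝒜 i}

/-- `(R, 𝒜)` is a *Koszul algebra* over `k`: `R₀` is a finite product of copies of `k`,
and `R₀ = R/r`, viewed as a graded `R`-module (with the grading induced from `𝒜`),
admits a linear graded projective resolution. -/
def IsKoszulAlgebra [GradedAlgebra 𝒜] : Prop :=
  (∃ c : ℕ, Nonempty (gradeZeroSubalgebra k R 𝒜 ≃ₐ[k] (Fin c → k))) ∧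
  ∃ ℳ : ModuleGrading k R 𝒜 (R ⧸ gradedRadical k R 𝒜),
    (∀ i : ℕ, ℳ.piece (i : ℤ) =
      (𝒜 i).map ((gradedRadical k R 𝒜).mkQ.restrictScalars k)) ∧
    Nonempty (LinearResolution k R 𝒜 (R ⧸ gradedRadical k R 𝒜) ℳ)

/-- A module is indecomposable if it is nonzero and is not the internal direct sum of two
nonzero submodules. -/
def IsIndecomposableModule (R M : Type) [Ring R] [AddCommGroup M] [Module R M] : Prop :=
  Nontrivial M ∧ ∀ N₁ N₂ : Submodule R M, IsCompl N₁ N₂ → N₁ = ⊥ ∨ N₂ = ⊥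

variable {k R 𝒜}

namespace LinearResolution

variable {M : Type} [AddCommGroup M] [Module R M] [Module k M] [IsScalarTower k R M]
  {ℳ : ModuleGrading k R 𝒜 M}

/-- `η : Pⁿ → M` is a cocycle: `η ∘ d_{n+1} = 0`, i.e. `η` represents an element of
`Ext^n_R(M,M)`. -/
def IsCocycle (res : LinearResolution k R 𝒜 M ℳ) (n : ℕ) (η : res.P n →ₗ[R] M) : Prop :=
  η.comp (res.d n) = 0

/-- `η : Pⁿ → M` is a coboundary, i.e. `η` represents the zero element of
`Ext^n_R(M,M)`. -/
def IsCoboundary (res : LinearResolution k R 𝒜 M ℳ) :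
    ∀ n : ℕ, (res.P n →ₗ[R] M) → Prop
  | 0, η => η = 0
  | n + 1, η => ∃ h : res.P n →ₗ[R] M, η = h.comp (res.d n)

/-- `η : Pⁿ → M` is a homomorphism of degree `s`. -/
def HasDegree (res : LinearResolution k R 𝒜 M ℳ) (n : ℕ) (η : res.P n →ₗ[R] M)
    (s : ℤ) : Prop :=
  ∀ {j : ℤ} {x : res.P n}, x ∈ (res.grading n).piece j → η x ∈ ℳ.piece (j + s)

/-- The family `l i : P^{n+i} → P^i` is a family of liftings of `η : Pⁿ → M` along the
resolution: `ε ∘ l⁰ = η` and `d ∘ l^{i+1} = l^i ∘ d`. -/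
structure IsLifting (res : LinearResolution k R 𝒜 M ℳ) (n : ℕ) (η : res.P n →ₗ[R] M)
    (l : ∀ i, res.P (n + i) →ₗ[R] res.P i) : Prop where
  lift_zero : res.augment.comp (l 0) = η
  lift_comm : ∀ i, (res.d i).comp (l (i + 1)) = (l i).comp (res.d (n + i))

/-- The liftings `l i : P^{n+i} → P^i` of a degree `-n` cocycle are matrices with entries
in `R₀`, i.e. each `l i` is a homomorphism of degree `-n`. -/
def LiftingEntriesInDegreeZero (res : LinearResolution k R 𝒜 M ℳ) (n : ℕ)
    (l : ∀ i, res.P (n + i) →ₗ[R] res.P i) : Prop :=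
  ∀ (i : ℕ) {j : ℤ} {x : res.P (n + i)},
    x ∈ (res.grading (n + i)).piece j → l i x ∈ (res.grading i).piece (j - (n : ℤ))

end LinearResolution

/-! ### Degree filtrations of graded modules -/

namespace ModuleGrading

variable {M : Type} [AddCommGroup M] [Module R M] [Module k M] [IsScalarTower k R M]

/-- The homogeneous component of degree `j` of an element of a graded module. -/
noncomputable def comp (G : ModuleGrading k R 𝒜 M) (j : ℤ) (x : M) : M :=
  letI := G.internal.chooseDecomposition
  (DirectSum.decompose G.piece x j : M)

variable (G : ModuleGrading k R 𝒜 M)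

lemma comp_add (j : ℤ) (x y : M) : G.comp j (x + y) = G.comp j x + G.comp j y := by
  let _ := G.internal.chooseDecomposition
  simp [comp]

lemma comp_zero (j : ℤ) : G.comp j 0 = 0 := by
  let _ := G.internal.chooseDecomposition
  simp [comp]

lemma comp_mem (j : ℤ) (x : M) : G.comp j x ∈ G.piece j := SetLike.coe_mem _

lemma comp_of_mem {j : ℤ} {x : M} (hx : x ∈ G.piece j) : G.comp j x = x := by
  let _ := G.internal.chooseDecomposition
  exact DirectSum.decompose_of_mem_same _ hx

lemma comp_of_mem_ne {i j : ℤ} {x : M} (hx : x ∈ G.piece i) (h : i ≠ j) : G.comp j x = 0 := by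
  let _ := G.internal.chooseDecomposition
  exact DirectSum.decompose_of_mem_ne _ hx h

lemma exists_sum (x : M) : ∃ s : Finset ℤ, x = ∑ j ∈ s, G.comp j x := by
  classical
  let _ := G.internal.chooseDecomposition
  exact ⟨_, (DirectSum.sum_support_decompose G.piece x).symm⟩

lemma eq_zero_of_comp {x : M} (h : ∀ j, G.comp j x = 0) : x = 0 := by
  obtain ⟨s, hs⟩ := G.exists_sum x
  rw [hs]
  exact Finset.sum_eq_zero fun j _ => h j

/-- The additive submonoid of elements concentrated in degrees `≥ d`. -/
noncomputable def above (d : ℤ) : AddSubmonoid M where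
  carrier := {x | ∀ j < d, G.comp j x = 0}
  zero_mem' := fun j _ => G.comp_zero j
  add_mem' := fun hx hy j hj => by rw [comp_add, hx j hj, hy j hj, add_zero]

lemma mem_above_of_mem {d j : ℤ} (h : d ≤ j) {x : M} (hx : x ∈ G.piece j) : x ∈ G.above d :=
  fun _ hi => G.comp_of_mem_ne hx (by omega)

lemma above_eq_top {d : ℤ} (h : ∀ j < d, G.piece j = ⊥) (x : M) : x ∈ G.above d := by
  intro j hj
  have := G.comp_mem j x
  rwa [h j hj, Submodule.mem_bot] at this

lemma above_induction {d : ℤ} {x : M} (hx : x ∈ G.above d) (S : AddSubmonoid M)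
    (hS : ∀ j, d ≤ j → ∀ y ∈ G.piece j, y ∈ S) : x ∈ S := by
  obtain ⟨s, hs⟩ := G.exists_sum x
  rw [hs]
  refine S.sum_mem fun j _ => ?_
  by_cases hj : j < d
  · rw [hx j hj]; exact S.zero_mem
  · exact hS j (by omega) _ (G.comp_mem j x)

lemma smul_mem_above {i : ℕ} {d : ℤ} {r : R} {x : M} (hr : r ∈ 𝒜 i) (hx : x ∈ G.above d) :
    r • x ∈ G.above (d + i) := by
  refine G.above_induction hx ((G.above (d + i)).comap (DistribSMul.toAddMonoidHom M r)) ?_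
  intro j hj y hy
  exact G.mem_above_of_mem (by omega) (G.smul_mem hr hy)

lemma above_mono {d e : ℤ} (h : d ≤ e) {x : M} (hx : x ∈ G.above e) : x ∈ G.above d :=
  fun j hj => hx j (by omega)

lemma eq_zero_of_mem_above {d e : ℤ} (h : d < e) {x : M} (hx : x ∈ G.piece d)
    (hx' : x ∈ G.above e) : x = 0 := by
  rw [← G.comp_of_mem hx]
  exact hx' d h

variable [GradedAlgebra 𝒜]

/-- `above` as an `R`-submodule; this uses that `R` lives in nonnegative degrees. -/
noncomputable def aboveSub (d : ℤ) : Submodule R M where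
  __ := G.above d
  smul_mem' := fun r x hx => by
    change r • x ∈ G.above d
    induction r using DirectSum.Decomposition.inductionOn 𝒜 with
    | zero => simp
    | homogeneous a => exact G.above_mono (by omega) (G.smul_mem_above a.2 hx)
    | add a b ha hb => rw [add_smul]; exact (G.above d).add_mem ha hb

lemma mem_aboveSub {d : ℤ} {x : M} : x ∈ G.aboveSub d ↔ x ∈ G.above d := Iff.rfl

lemma radical_smul_aboveSub_le (d : ℤ) :
    gradedRadical k R 𝒜 • G.aboveSub d ≤ G.aboveSub (d + 1) := by
  rw [Submodule.smul_le]
  intro r hr x hx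
  induction hr using Submodule.span_induction with
  | mem r hr =>
    obtain ⟨i, hi, hr⟩ := hr
    exact G.above_mono (by omega) (G.smul_mem_above hr hx)
  | zero => simp
  | add a b _ _ ha hb => rw [add_smul]; exact Submodule.add_mem _ ha hb
  | smul s a _ ha => rw [smul_assoc]; exact Submodule.smul_mem _ _ ha

end ModuleGrading

/-! ### Reduction modulo the graded radical -/

section Radical

variable [GradedAlgebra 𝒜]

variable (𝒜) in
/-- The projection `R → R₀` as a ring homomorphism. -/
noncomputable def projDegreeZero : R →+* gradeZeroSubalgebra k R 𝒜 :=
  (GradedRing.projZeroRingHom 𝒜).codRestrict (gradeZeroSubalgebra k R 𝒜)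
    fun x => SetLike.coe_mem (DirectSum.decompose 𝒜 x 0)

lemma projDegreeZero_coe (r : R) :
    (projDegreeZero 𝒜 r : R) = DirectSum.decompose 𝒜 r 0 := rfl

lemma projDegreeZero_surjective : Function.Surjective (projDegreeZero (k := k) 𝒜) := by
  intro x
  refine ⟨x, Subtype.ext ?_⟩
  rw [projDegreeZero_coe]
  exact DirectSum.decompose_of_mem_same 𝒜 x.2

lemma sub_projDegreeZero_mem (r : R) :
    r - (projDegreeZero 𝒜 r : R) ∈ gradedRadical k R 𝒜 := by
  induction r using DirectSum.Decomposition.inductionOn 𝒜 with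
  | zero => simp
  | @homogeneous i a =>
    rw [projDegreeZero_coe]
    by_cases hi : i = 0
    · subst hi
      rw [DirectSum.decompose_of_mem_same 𝒜 a.2, sub_self]
      exact Submodule.zero_mem _
    · rw [DirectSum.decompose_of_mem_ne 𝒜 a.2 hi, sub_zero]
      exact Submodule.subset_span ⟨i, Nat.pos_of_ne_zero hi, a.2⟩
  | add a b ha hb =>
    have : a + b - (projDegreeZero 𝒜 (a + b) : R) =
        (a - (projDegreeZero 𝒜 a : R)) + (b - (projDegreeZero 𝒜 b : R)) := by
      rw [map_add, AddMemClass.coe_add]; abel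
    rw [this]
    exact Submodule.add_mem _ ha hb

lemma isSemisimpleRing_gradeZero (h : IsKoszulAlgebra k R 𝒜) :
    IsSemisimpleRing (gradeZeroSubalgebra k R 𝒜) := by
  obtain ⟨⟨c, ⟨e⟩⟩, -⟩ := h
  exact e.symm.toRingEquiv.isSemisimpleRing

/-- `M/rM` is semisimple over `R`, because `R` acts on it through the semisimple ring `R₀`. -/
lemma isSemisimple_quotient (h : IsSemisimpleRing (gradeZeroSubalgebra k R 𝒜))
    (M : Type) [AddCommGroup M] [Module R M] :
    IsSemisimpleModule R
      (M ⧸ (gradedRadical k R 𝒜 • (⊤ : Submodule R M))) := by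
  have : RingHomSurjective (projDegreeZero (k := k) 𝒜) := ⟨projDegreeZero_surjective⟩
  let Q := M ⧸ (gradedRadical k R 𝒜 • (⊤ : Submodule R M))
  let f : Q →ₛₗ[projDegreeZero (k := k) 𝒜] Q :=
    { toFun := id
      map_add' := fun _ _ => rfl
      map_smul' := fun r x => by
        obtain ⟨x, rfl⟩ := Submodule.Quotient.mk_surjective _ x
        change r • (Submodule.Quotient.mk x : Q) =
          (projDegreeZero 𝒜 r : R) • (Submodule.Quotient.mk x : Q)
        rw [← sub_eq_zero, ← sub_smul, ← Submodule.Quotient.mk_smul,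
          Submodule.Quotient.mk_eq_zero]
        exact Submodule.smul_mem_smul (sub_projDegreeZero_mem r) trivial }
  have hf : Function.Bijective f := Function.bijective_id
  exact (f.isSemisimpleModule_iff_of_bijective hf).2 inferInstance

variable {A B : Type} [AddCommGroup A] [Module R A] [Module k A] [IsScalarTower k R A]
  [AddCommGroup B] [Module R B] [Module k B] [IsScalarTower k R B]

/-- An element of a module generated in degree `c` is congruent to one of degree `c` modulo the
radical. -/
lemma exists_generator_congr (GA : ModuleGrading k R 𝒜 A) {c : ℤ}
    (hgen : Submodule.span R (GA.piece c : Set A) = ⊤) (a : A) :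
    ∃ a₀ ∈ GA.piece c, a - a₀ ∈ gradedRadical k R 𝒜 • (⊤ : Submodule R A) := by
  have ha : a ∈ Submodule.span R (GA.piece c : Set A) := hgen ▸ trivial
  induction ha using Submodule.span_induction with
  | mem x hx => exact ⟨x, hx, by simp⟩
  | zero => exact ⟨0, Submodule.zero_mem _, by simp⟩
  | add x y _ _ hx hy =>
    obtain ⟨x₀, hx₀, hx⟩ := hx
    obtain ⟨y₀, hy₀, hy⟩ := hy
    refine ⟨x₀ + y₀, Submodule.add_mem _ hx₀ hy₀, ?_⟩
    rw [add_sub_add_comm]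
    exact Submodule.add_mem _ hx hy
  | smul s x _ hx =>
    obtain ⟨x₀, hx₀, hx⟩ := hx
    refine ⟨(projDegreeZero 𝒜 s : R) • x₀, ?_, ?_⟩
    · simpa using GA.smul_mem (i := 0) (projDegreeZero 𝒜 s).2 hx₀
    · have : s • x - (projDegreeZero 𝒜 s : R) • x₀ =
          s • (x - x₀) + (s - (projDegreeZero 𝒜 s : R)) • x₀ := by
        rw [smul_sub, sub_smul]; abel
      rw [this]
      exact Submodule.add_mem _ (Submodule.smul_mem _ _ hx)
        (Submodule.smul_mem_smul (sub_projDegreeZero_mem s) trivial)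

/-- The only fixed point of an endomorphism mapping `A` to `rA` is zero, since `A` is bounded
below. -/
lemma eq_zero_of_fixed (GA : ModuleGrading k R 𝒜 A) {c : ℤ} (hA : ∀ j < c, GA.piece j = ⊥)
    (N : A →ₗ[R] A) (hN : ∀ a, N a ∈ gradedRadical k R 𝒜 • (⊤ : Submodule R A))
    {x : A} (hx : N x = x) : x = 0 := by
  -- `F m = r^m A`
  let F : ℕ → Submodule R A := fun m =>
    Nat.rec ⊤ (fun _ S => gradedRadical k R 𝒜 • S) m
  have hFs : ∀ m, F (m + 1) = gradedRadical k R 𝒜 • F m := fun _ => rfl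
  have hNF : ∀ m, (F m).map N ≤ F (m + 1) := by
    intro m
    induction m with
    | zero =>
      rintro _ ⟨a, -, rfl⟩
      exact hN a
    | succ m ih =>
      rw [hFs m, Submodule.map_smul'', hFs (m + 1)]
      exact Submodule.smul_mono le_rfl ih
  have hxF : ∀ m, x ∈ F m := by
    intro m
    induction m with
    | zero => trivial
    | succ m ih => exact hNF m ⟨x, ih, hx⟩
  have hFD : ∀ m : ℕ, F m ≤ GA.aboveSub (c + m) := by
    intro m
    induction m with
    | zero =>
      intro y _
      rw [ModuleGrading.mem_aboveSub]
      simpa using GA.above_eq_top hA y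
    | succ m ih =>
      rw [hFs m]
      refine (Submodule.smul_mono le_rfl ih).trans ?_
      refine (GA.radical_smul_aboveSub_le _).trans_eq ?_
      push_cast
      rw [add_assoc]
  refine GA.eq_zero_of_comp fun j => ?_
  exact hFD ((j - c).toNat + 1) (hxF ((j - c).toNat + 1)) j (by push_cast; omega)

/-- A map to a projective module which carries the generating degree of the source injectively to
the lowest degree of the target is injective. -/
lemma injective_of_injOn_generators (h : IsSemisimpleRing (gradeZeroSubalgebra k R 𝒜))
    (GA : ModuleGrading k R 𝒜 A) (GB : ModuleGrading k R 𝒜 B) {c b : ℤ}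
    (hgen : Submodule.span R (GA.piece c : Set A) = ⊤)
    (hA : ∀ j < c, GA.piece j = ⊥) (hB : ∀ j < b, GB.piece j = ⊥)
    [Module.Projective R B] (f : A →ₗ[R] B)
    (hf : ∀ x ∈ GA.piece c, f x ∈ GB.piece b)
    (hinj : ∀ x ∈ GA.piece c, f x = 0 → x = 0) : Function.Injective f := by
  let rA := gradedRadical k R 𝒜 • (⊤ : Submodule R A)
  let rB := gradedRadical k R 𝒜 • (⊤ : Submodule R B)
  have hle : rA ≤ rB.comap f := by
    rw [← Submodule.map_le_iff_le_comap, Submodule.map_smul'']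
    exact Submodule.smul_mono le_rfl le_top
  have hrB : rB ≤ GB.aboveSub (b + 1) :=
    (Submodule.smul_mono le_rfl fun y _ => GB.above_eq_top hB y).trans
      (GB.radical_smul_aboveSub_le b)
  let f' : (A ⧸ rA) →ₗ[R] (B ⧸ rB) := rA.mapQ rB f hle
  have hf' : Function.Injective f' := by
    rw [injective_iff_map_eq_zero]
    intro q hq
    obtain ⟨a, rfl⟩ := Submodule.Quotient.mk_surjective _ q
    have hfa : f a ∈ rB := (Submodule.Quotient.mk_eq_zero _).1 hq
    obtain ⟨a₀, ha₀, haa⟩ := exists_generator_congr GA hgen a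
    have hfa₀ : f a₀ ∈ rB := by
      have := rB.sub_mem hfa (hle haa)
      simpa using this
    have h0 : a₀ = 0 :=
      hinj a₀ ha₀ (GB.eq_zero_of_mem_above (lt_add_one b) (hf a₀ ha₀) (hrB hfa₀))
    rw [Submodule.Quotient.mk_eq_zero]
    simpa [h0] using haa
  have : IsSemisimpleModule R (B ⧸ rB) := isSemisimple_quotient h B
  obtain ⟨ρ, hρ⟩ := IsSemisimpleModule.extension_property f' hf' LinearMap.id
  obtain ⟨s, hs⟩ := Module.projective_lifting_property rA.mkQ (ρ.comp rB.mkQ) rA.mkQ_surjective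
  have hN : ∀ a, (LinearMap.id - s.comp f : A →ₗ[R] A) a ∈ rA := by
    intro a
    rw [← Submodule.Quotient.mk_eq_zero]
    have h1 : rA.mkQ (s (f a)) = ρ (rB.mkQ (f a)) := LinearMap.congr_fun hs (f a)
    have h2 : ρ (f' (rA.mkQ a)) = rA.mkQ a := LinearMap.congr_fun hρ (rA.mkQ a)
    change rA.mkQ (a - s (f a)) = 0
    rw [map_sub, h1, sub_eq_zero]
    exact h2.symm
  rw [injective_iff_map_eq_zero]
  intro x hx
  exact eq_zero_of_fixed GA hA _ hN (by simp [hx])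

end Radical

/-! ### Liftings -/

/-- The differential is injective on the generating degree `m + 1` of `P^{m+1}`: its kernel is the
image of `P^{m+2}`, which lives in degrees at least `m + 2`. -/
lemma LinearResolution.eq_zero_of_d_eq_zero {M : Type} [AddCommGroup M] [Module R M] [Module k M]
    [IsScalarTower k R M] {ℳ : ModuleGrading k R 𝒜 M} (res : LinearResolution k R 𝒜 M ℳ)
    (m : ℕ) {x : res.P (m + 1)} (hx : x ∈ (res.grading (m + 1)).piece ((m + 1 : ℕ) : ℤ))
    (hd : res.d m x = 0) : x = 0 := by
  have hker : x ∈ LinearMap.ker (res.d m) := hd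
  rw [res.exact_succ m] at hker
  obtain ⟨y, rfl⟩ := hker
  refine (res.grading (m + 1)).eq_zero_of_mem_above (e := ((m + 1 + 1 : ℕ) : ℤ))
    (by push_cast; omega) hx ?_
  refine (res.grading (m + 1 + 1)).above_induction
    ((res.grading (m + 1 + 1)).above_eq_top (res.vanish (m + 1 + 1)) y)
    (((res.grading (m + 1)).above _).comap (res.d (m + 1)).toAddMonoidHom) ?_
  intro j hj z hz
  exact (res.grading (m + 1)).mem_above_of_mem hj (res.d_degree (m + 1) hz)

/-- **Proposition 3.9.** Let `R` be a Koszul algebra over a field `k` and let `M` be an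
indecomposable linear `R`-module (so `M` is a graded module generated in degree `0` with
a minimal linear resolution `res`).  Let `n ≥ 1` and let `0 ≠ η : P_M^n → M` represent
an element of `Δ_M^n = Ext^n_R(M,M)_{-n}` (i.e. `η` is a cocycle which is a degree `-n`
homomorphism), and for each `i ≥ 0` let `l i : P_M^{n+i} → P_M^i` be liftings of `η`
along the minimal linear resolution of `M`, with all entries in `R₀` (i.e. each `l i` is
a degree `-n` homomorphism).  If `l j` is a monomorphism for some `j ≥ 0`, then all
subsequent liftings `l (j+t)`, `t ≥ 0`, are monomorphisms. -/
theorem liftings_injective_of_injective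
    {k R : Type} [Field k] [Ring R] [Algebra k R] {𝒜 : ℕ → Submodule k R}
    [GradedAlgebra 𝒜] (hKoszul : IsKoszulAlgebra k R 𝒜)
    {M : Type} [AddCommGroup M] [Module R M] [Module k M] [IsScalarTower k R M]
    {ℳ : ModuleGrading k R 𝒜 M}
    (hgen : Submodule.span R ((ℳ.piece 0 : Set M)) = ⊤)
    (hvanish : ∀ j : ℤ, j < 0 → ℳ.piece j = ⊥)
    (hind : IsIndecomposableModule R M)
    (res : LinearResolution k R 𝒜 M ℳ)
    (n : ℕ) (hn : 1 ≤ n) (η : res.P n →ₗ[R] M) (hη : η ≠ 0)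
    (hcoc : res.IsCocycle n η) (hdeg : res.HasDegree n η (-(n : ℤ)))
    (l : ∀ i, res.P (n + i) →ₗ[R] res.P i)
    (hl : res.IsLifting n η l) (hl0 : res.LiftingEntriesInDegreeZero n l)
    (j : ℕ) (hj : Function.Injective (l j)) :
    ∀ t : ℕ, Function.Injective (l (j + t)) := by
  have hss := isSemisimpleRing_gradeZero hKoszul
  intro t
  induction t with
  | zero => exact hj
  | succ t ih =>
    have := res.projective (j + t + 1)
    refine injective_of_injOn_generators hss (res.grading (n + (j + t) + 1))
      (res.grading (j + t + 1)) (res.generated _) (res.vanish _) (res.vanish _)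
      (l (j + t + 1)) ?_ ?_
    · intro x hx
      have := hl0 (j + t + 1) hx
      convert this using 2
      push_cast
      ring
    · intro x hx hlx
      refine res.eq_zero_of_d_eq_zero (n + (j + t)) hx (ih ?_)
      have := LinearMap.congr_fun (hl.lift_comm (j + t)) x
      rw [map_zero]
      refine this.symm.trans ?_
      change res.d (j + t) (l (j + t + 1) x) = 0
      rw [hlx, map_zero]
end

section
/- Let R be a Koszul algebra over a field k and let M be an indecomposable linear R-module of infinite projective dimension such that no syzygy of M has a nonzero projective direct summand. Suppose that for some n ≥ 1, η: P_M^n → M represents a nonzero element of Δ_M^n = Ext^n_R(M,M)_{-n}, and for each i ≥ 0 let l^i: P_M^{n+i} → P_M^i be liftings of η with entries in R_0. If l^j is an epimorphism for some j ≥ 0, then all the previous liftings l^{j-k} for 0 ≤ k ≤ j are epimorphisms. -/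
variable (k : Type) [Field k] (R : Type) [Ring R] [Algebra k R]
  (𝒜 : ℕ → Submodule k R)

variable {k R 𝒜}

/-! ### Homogeneous components -/

namespace ModuleGrading

section

variable {N : Type} [AddCommGroup N] [Module R N] [Module k N] [IsScalarTower k R N]
  {Q : Type} [AddCommGroup Q] [Module R Q] [Module k Q] [IsScalarTower k R Q]

/-- The decomposition of a graded module into its homogeneous pieces, as a linear equivalence. -/
noncomputable def equiv (G : ModuleGrading k R 𝒜 N) : (DirectSum ℤ fun j => G.piece j) ≃ₗ[k] N :=
  LinearEquiv.ofBijective (DirectSum.coeLinearMap G.piece) G.internal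

lemma equiv_symm_of_mem (G : ModuleGrading k R 𝒜 N) {j : ℤ} {x : N} (hx : x ∈ G.piece j) :
    G.equiv.symm x = DirectSum.lof k ℤ (fun j => G.piece j) j ⟨x, hx⟩ := by
  rw [LinearEquiv.symm_apply_eq]
  exact (DirectSum.coeLinearMap_lof G.piece j ⟨x, hx⟩).symm

/-- The projection of a graded module onto its homogeneous piece of degree `m`. -/
noncomputable def proj (G : ModuleGrading k R 𝒜 N) (m : ℤ) : N →ₗ[k] N :=
  (G.piece m).subtype ∘ₗ DirectSum.component k ℤ (fun j => G.piece j) m ∘ₗ G.equiv.symm.toLinearMap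

lemma proj_mem (G : ModuleGrading k R 𝒜 N) (m : ℤ) (x : N) : G.proj m x ∈ G.piece m :=
  Subtype.mem _

lemma proj_same (G : ModuleGrading k R 𝒜 N) {m : ℤ} {x : N} (hx : x ∈ G.piece m) :
    G.proj m x = x := by
  simp [proj, G.equiv_symm_of_mem hx, DirectSum.component.lof_self]

lemma proj_ne (G : ModuleGrading k R 𝒜 N) {m j : ℤ} {x : N} (hx : x ∈ G.piece j) (h : j ≠ m) :
    G.proj m x = 0 := by
  simp [proj, G.equiv_symm_of_mem hx, DirectSum.component.of, h]

lemma induction (G : ModuleGrading k R 𝒜 N) {p : N → Prop}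
    (h0 : p 0) (hadd : ∀ x y, p x → p y → p (x + y))
    (hom : ∀ j, ∀ x ∈ G.piece j, p x) (x : N) : p x := by
  have hx : x ∈ ⨆ j, G.piece j := by
    rw [G.internal.submodule_iSup_eq_top]; trivial
  exact Submodule.iSup_induction _ (motive := p) hx hom h0 hadd

lemma proj_smul (G : ModuleGrading k R 𝒜 N) {i : ℕ} {r : R} (hr : r ∈ 𝒜 i) (m : ℤ) (x : N) :
    G.proj (i + m) (r • x) = r • G.proj m x := by
  induction x using G.induction with
  | h0 => simp
  | hadd x y hx hy => simp [smul_add, hx, hy]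
  | hom j x hx =>
    by_cases h : j = m
    · subst h
      rw [G.proj_same hx, G.proj_same (G.smul_mem hr hx)]
    · rw [G.proj_ne hx h, G.proj_ne (G.smul_mem hr hx) (by omega), smul_zero]

/-- On a homogeneous element of degree `m`, the degree-`m` part of scalar multiplication by `r`
is scalar multiplication by the degree-zero part of `r`. -/
lemma proj_smul_of_mem [GradedAlgebra 𝒜] (G : ModuleGrading k R 𝒜 N) {m : ℤ} {x : N}
    (hx : x ∈ G.piece m) (r : R) :
    G.proj m (r • x) = (DirectSum.decompose 𝒜 r 0 : R) • x := by
  induction r using DirectSum.Decomposition.inductionOn 𝒜 with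
  | zero => simp
  | @homogeneous i r =>
    by_cases h : i = 0
    · subst h
      rw [DirectSum.decompose_of_mem_same 𝒜 r.2, G.proj_same]
      simpa using G.smul_mem r.2 hx
    · rw [DirectSum.decompose_of_mem_ne 𝒜 r.2 h, zero_smul,
        G.proj_ne (G.smul_mem r.2 hx) (by omega)]
  | add r s hr hs => simp [add_smul, hr, hs, DirectSum.decompose_add]

/-- The degree-`s` homogeneous component of a homomorphism between graded modules. -/
lemma exists_component [GradedAlgebra 𝒜] (G : ModuleGrading k R 𝒜 N) (H : ModuleGrading k R 𝒜 Q)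
    (φ : N →ₗ[R] Q) (s : ℤ) :
    ∃ h : N →ₗ[R] Q, ∀ j, ∀ x ∈ G.piece j, h x = H.proj (j + s) (φ x) := by
  let h₀ : N →ₗ[k] Q := DirectSum.toModule k ℤ Q
    (fun j => H.proj (j + s) ∘ₗ φ.restrictScalars k ∘ₗ (G.piece j).subtype) ∘ₗ
      G.equiv.symm.toLinearMap
  have key : ∀ j, ∀ x ∈ G.piece j, h₀ x = H.proj (j + s) (φ x) := by
    intro j x hx
    simp [h₀, G.equiv_symm_of_mem hx, DirectSum.toModule_lof]
  refine ⟨{ toFun := h₀, map_add' := h₀.map_add, map_smul' := ?_ }, key⟩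
  intro r x
  induction x using G.induction with
  | h0 => simp
  | hadd x y hx hy =>
    simp only [RingHom.id_apply] at hx hy ⊢
    rw [smul_add, map_add, map_add, hx, hy, smul_add]
  | hom j x hx =>
    simp only [RingHom.id_apply]
    induction r using DirectSum.Decomposition.inductionOn 𝒜 with
    | zero => simp
    | @homogeneous i r =>
      rw [key _ _ (G.smul_mem r.2 hx), key _ _ hx, map_smul, add_assoc, H.proj_smul r.2]
    | add r s hr hs => rw [add_smul, map_add, hr, hs, add_smul]

/-- The piece of degree `m` as a module over `R₀`. -/
def pieceZero [GradedAlgebra 𝒜] (G : ModuleGrading k R 𝒜 N) (m : ℤ) :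
    Submodule (gradeZeroSubalgebra k R 𝒜) N where
  carrier := G.piece m
  add_mem' := (G.piece m).add_mem
  zero_mem' := (G.piece m).zero_mem
  smul_mem' := fun c x hx => by
    have := G.smul_mem (i := 0) (r := (c : R)) c.2 hx
    rw [Nat.cast_zero, zero_add] at this
    exact this

/-! ### Homogeneous maps between projectives have complemented range -/

/-- On a graded projective module generated in degree `a`, an `R₀`-linear map sending the piece of
degree `a` into a single homogeneous piece agrees on that piece with an `R`-linear map. -/
lemma exists_extension [GradedAlgebra 𝒜] (G : ModuleGrading k R 𝒜 N) (H : ModuleGrading k R 𝒜 Q)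
    [Module.Projective R N] (a b : ℤ)
    (hgen : Submodule.span R (G.piece a : Set N) = ⊤)
    (g : N →ₗ[gradeZeroSubalgebra k R 𝒜] Q) (hg : ∀ x ∈ G.piece a, g x ∈ H.piece b) :
    ∃ h : N →ₗ[R] Q, ∀ x ∈ G.piece a, h x = g x := by
  let p : (G.piece a →₀ R) →ₗ[R] N := Finsupp.linearCombination R (fun x : G.piece a => (x : N))
  have hp : LinearMap.range p = ⊤ := by
    rw [Finsupp.range_linearCombination, Subtype.range_coe_subtype]
    exact hgen
  obtain ⟨s, hs⟩ := p.exists_rightInverse_of_surjective hp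
  let γ : (G.piece a →₀ R) →ₗ[R] Q := Finsupp.linearCombination R (fun x : G.piece a => g x)
  -- Comparing degree-zero parts of the coefficients uses only the `R₀`-linearity of `g`.
  have key : ∀ u, H.proj b (γ u) = g (G.proj a (p u)) := by
    intro u
    induction u using Finsupp.induction_linear with
    | zero => simp
    | add u v hu hv => simp only [map_add, hu, hv]
    | single x r =>
      simp only [p, γ, Finsupp.linearCombination_single]
      rw [G.proj_smul_of_mem x.2, H.proj_smul_of_mem (hg x x.2)]
      exact (g.map_smul (⟨_, (DirectSum.decompose 𝒜 r 0).2⟩ : gradeZeroSubalgebra k R 𝒜) x).symm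
  obtain ⟨h, hh⟩ := G.exists_component H (γ ∘ₗ s) (b - a)
  refine ⟨h, fun x hx => ?_⟩
  have hsx : p (s x) = x := LinearMap.congr_fun hs x
  rw [hh a x hx, add_sub_cancel, LinearMap.comp_apply, key, hsx, G.proj_same hx]

/-- Over semisimple `R₀`, a map from a graded module generated in degree `b` to a graded projective
module generated in degree `a` has complemented range if it sends degree `b` into degree `a`. -/
lemma exists_isCompl_range_of_degree [GradedAlgebra 𝒜]
    [IsSemisimpleRing (gradeZeroSubalgebra k R 𝒜)]
    (G : ModuleGrading k R 𝒜 N) (H : ModuleGrading k R 𝒜 Q) [Module.Projective R N] (a b : ℤ)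
    (hgenN : Submodule.span R (G.piece a : Set N) = ⊤)
    (hgenQ : Submodule.span R (H.piece b : Set Q) = ⊤)
    (f : Q →ₗ[R] N) (hf : ∀ x ∈ H.piece b, f x ∈ G.piece a) :
    ∃ C, IsCompl (LinearMap.range f) C := by
  let S := gradeZeroSubalgebra k R 𝒜
  let fS : Q →ₗ[S] N := { f with map_smul' := fun c x => f.map_smul (c : R) x }
  let f₀ : H.pieceZero b →ₗ[S] N := fS ∘ₗ (H.pieceZero b).subtype
  have := Module.projective_of_isSemisimpleRing S (LinearMap.range f₀)
  obtain ⟨s, hs⟩ := f₀.rangeRestrict.exists_rightInverse_of_surjective f₀.range_rangeRestrict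
  obtain ⟨C, hC⟩ := exists_isCompl (LinearMap.range f₀)
  let g : N →ₗ[S] Q := (H.pieceZero b).subtype ∘ₗ s ∘ₗ
    Submodule.projectionOnto (LinearMap.range f₀) C hC
  obtain ⟨h, hh⟩ := G.exists_extension H a b hgenN g (fun x _ => Subtype.mem _)
  have hfg : ∀ x ∈ H.piece b, f (g (f x)) = f x := by
    intro x hx
    have hr : f x ∈ LinearMap.range f₀ := ⟨⟨x, hx⟩, rfl⟩
    have h1 : Submodule.projectionOnto (LinearMap.range f₀) C hC (f x) = ⟨f x, hr⟩ :=
      Submodule.projectionOnto_apply_left hC ⟨f x, hr⟩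
    have h2 : f₀ (s ⟨f x, hr⟩) = f x :=
      congrArg Subtype.val (LinearMap.congr_fun hs ⟨f x, hr⟩)
    simp only [g, LinearMap.comp_apply, h1]
    exact h2
  have hfhf : f ∘ₗ h ∘ₗ f = f := by
    refine LinearMap.ext_on hgenQ fun x hx => ?_
    simp only [LinearMap.comp_apply]
    rw [hh _ (hf x hx), hfg x hx]
  have hidem : IsIdempotentElem (f ∘ₗ h) := by
    ext x
    exact LinearMap.congr_fun hfhf (h x)
  have hrange : LinearMap.range (f ∘ₗ h) = LinearMap.range f := by
    refine le_antisymm (LinearMap.range_comp_le_range _ _) ?_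
    rintro _ ⟨x, rfl⟩
    exact ⟨f x, LinearMap.congr_fun hfhf x⟩
  exact ⟨_, hrange ▸ LinearMap.IsIdempotentElem.isCompl hidem⟩

end

end ModuleGrading

/-! ### Direct summands and quotients -/

section Summands

variable {A : Type} [Ring A] {P X : Type} [AddCommGroup P] [Module A P] [AddCommGroup X] [Module A X]

lemma projective_of_isCompl [Module.Projective A P] {Q₁ Q₂ : Submodule A P} (h : IsCompl Q₁ Q₂) :
    Module.Projective A Q₁ :=
  Module.Projective.of_split Q₁.subtype (Submodule.projectionOnto Q₁ Q₂ h)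
    (by ext x; simp [Submodule.projectionOnto_apply_left h x])

/-- A decomposition of `P` descends to any quotient of `P` by a submodule of one summand. -/
lemma isCompl_map_of_ker_le {Q₁ Q₂ : Submodule A P} (h : IsCompl Q₁ Q₂) (p : P →ₗ[A] X)
    (hp : Function.Surjective p) (hk : LinearMap.ker p ≤ Q₁) :
    IsCompl (Q₁.map p) (Q₂.map p) := by
  constructor
  · rw [Submodule.disjoint_def]
    rintro _ ⟨x, hx, rfl⟩ ⟨y, hy, hxy⟩
    have h1 : y - x ∈ Q₁ := hk (by simp [hxy])
    have h2 : y ∈ Q₁ := by simpa using Q₁.add_mem h1 hx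
    rw [← hxy, Submodule.disjoint_def.1 h.disjoint y h2 hy, map_zero]
  · rw [codisjoint_iff, ← Submodule.map_sup, h.sup_eq_top, Submodule.map_top,
      LinearMap.range_eq_top.2 hp]

lemma projective_map_of_ker_le [Module.Projective A P] {Q₁ Q₂ : Submodule A P}
    (h : IsCompl Q₁ Q₂) (p : P →ₗ[A] X) (hk : LinearMap.ker p ≤ Q₁) :
    Module.Projective A (Q₂.map p) := by
  have := projective_of_isCompl h.symm
  refine Module.Projective.of_equiv' (LinearEquiv.ofBijective (p.submoduleMap Q₂)
    ⟨?_, p.submoduleMap_surjective Q₂⟩)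
  rw [← LinearMap.ker_eq_bot, LinearMap.ker_eq_bot']
  intro x hx
  have hx' : p x = 0 := congrArg Subtype.val hx
  exact Subtype.ext (Submodule.disjoint_def.1 h.disjoint x (hk hx') x.2)

lemma eq_top_of_map_eq_bot {Q₁ Q₂ : Submodule A P} (h : IsCompl Q₁ Q₂) (p : P →ₗ[A] X)
    (hk : LinearMap.ker p ≤ Q₁) (h0 : Q₂.map p = ⊥) : Q₁ = ⊤ := by
  have h1 : Q₂ ≤ Q₁ := (LinearMap.le_ker_iff_map.2 h0).trans hk
  rw [← h.sup_eq_top, sup_eq_left.2 h1]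

end Summands

/-- **Proposition 3.11.** Let `R` be a Koszul algebra over a field `k` and let `M` be an
indecomposable linear `R`-module of infinite projective dimension (every term of its
minimal linear resolution is nonzero) with the property that none of its syzygies
`Ω^{i+1} M = range (d i)` has a nonzero projective direct summand.  Assume that for some
`n ≥ 1`, `η : P_M^n → M` represents a nonzero element of `Δ_M^n = Ext^n_R(M,M)_{-n}`
(`η` is a degree `-n` cocycle which is not a coboundary), and for each `i ≥ 0` let
`l i : P_M^{n+i} → P_M^i` be liftings of `η` with entries in `R₀`.  If `l j` is an
epimorphism for some `j ≥ 0`, then all the previous liftings `l (j - t)`, `0 ≤ t ≤ j`,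
are epimorphisms. -/
theorem liftings_surjective_of_surjective
    {k R : Type} [Field k] [Ring R] [Algebra k R] {𝒜 : ℕ → Submodule k R}
    [GradedAlgebra 𝒜] (hKoszul : IsKoszulAlgebra k R 𝒜)
    {M : Type} [AddCommGroup M] [Module R M] [Module k M] [IsScalarTower k R M]
    {ℳ : ModuleGrading k R 𝒜 M}
    (hgen : Submodule.span R ((ℳ.piece 0 : Set M)) = ⊤)
    (hvanish : ∀ j : ℤ, j < 0 → ℳ.piece j = ⊥)
    (hind : IsIndecomposableModule R M)
    (res : LinearResolution k R 𝒜 M ℳ)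
    (hinfdim : ∀ i, Nontrivial (res.P i))
    (hnoproj : ∀ i, ∀ N₁ N₂ : Submodule R ↥(LinearMap.range (res.d i)),
      IsCompl N₁ N₂ → Module.Projective R ↥N₁ → N₁ = ⊥)
    (n : ℕ) (hn : 1 ≤ n) (η : res.P n →ₗ[R] M)
    (hcoc : res.IsCocycle n η) (hdeg : res.HasDegree n η (-(n : ℤ)))
    (hnz : ¬ res.IsCoboundary n η)
    (l : ∀ i, res.P (n + i) →ₗ[R] res.P i)
    (hl : res.IsLifting n η l) (hl0 : res.LiftingEntriesInDegreeZero n l)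
    (j : ℕ) (hj : Function.Surjective (l j)) :
    ∀ t : ℕ, t ≤ j → Function.Surjective (l (j - t)) := by
  obtain ⟨⟨c, ⟨e⟩⟩, -⟩ := hKoszul
  have : IsSemisimpleRing (gradeZeroSubalgebra k R 𝒜) := e.symm.toRingEquiv.isSemisimpleRing
  have hproj := res.projective
  have step : ∀ i, Function.Surjective (l (i + 1)) → Function.Surjective (l i) := by
    intro i hi
    obtain ⟨C, hC⟩ := (res.grading i).exists_isCompl_range_of_degree (res.grading (n + i))
      i ((n + i : ℕ) : ℤ) (res.generated i) (res.generated (n + i)) (l i)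
      (fun x hx => by simpa using hl0 i hx)
    have hd : LinearMap.range (res.d i) ≤ LinearMap.range (l i) := by
      rintro _ ⟨y, rfl⟩
      obtain ⟨z, rfl⟩ := hi y
      exact ⟨res.d (n + i) z, (LinearMap.congr_fun (hl.lift_comm i) z).symm⟩
    rw [← LinearMap.range_eq_top]
    cases i with
    | succ i =>
      have hk : LinearMap.ker (res.d i).rangeRestrict ≤ LinearMap.range (l (i + 1)) := by
        rw [LinearMap.ker_rangeRestrict, res.exact_succ]
        exact hd
      exact eq_top_of_map_eq_bot hC _ hk (hnoproj i _ _
        (isCompl_map_of_ker_le hC _ (res.d i).surjective_rangeRestrict hk).symm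
        (projective_map_of_ker_le hC _ hk))
    | zero =>
      have hk : LinearMap.ker res.augment ≤ LinearMap.range (l 0) := res.exact_zero ▸ hd
      rcases hind.2 _ _ (isCompl_map_of_ker_le hC _ res.augment_surjective hk) with h | h
      · exfalso
        have heq : LinearMap.range (l 0) = LinearMap.range (res.d 0) :=
          le_antisymm (res.exact_zero ▸ LinearMap.le_ker_iff_map.2 h) hd
        have hzero : ∀ i, Module.Projective R (LinearMap.range (res.d i)) → res.d i = 0 := by
          intro i hi
          have htop := hnoproj i ⊤ ⊥ isCompl_top_bot
            (Module.Projective.of_equiv' Submodule.topEquiv.symm)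
          ext x
          have hx : (res.d i).rangeRestrict x ∈ (⊤ : Submodule R (LinearMap.range (res.d i))) :=
            trivial
          rw [htop, Submodule.mem_bot] at hx
          exact congrArg Subtype.val hx
        have h0 : res.d 0 = 0 := hzero 0 (projective_of_isCompl (heq ▸ hC))
        have h1 : LinearMap.range (res.d 1) = ⊤ := by
          rw [← res.exact_succ 0, h0, LinearMap.ker_zero]
        have h2 : res.d 1 = 0 := hzero 1 (h1 ▸ Module.Projective.of_equiv' Submodule.topEquiv.symm)
        rw [h2, LinearMap.range_zero] at h1
        have := hinfdim 1
        exact bot_ne_top h1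
      · exact eq_top_of_map_eq_bot hC _ hk h
  intro t
  induction t with
  | zero => intro _; exact hj
  | succ t ih =>
    intro ht
    refine step _ ?_
    have h : j - (t + 1) + 1 = j - t := by omega
    rw [h]
    exact ih (by omega)
end
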